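/- arXiv:1703.10646 — 2 statements merged into one kernel-verified Lean document; each statement's English description precedes it below -/
import Mathlib

section
/- Every ε ∈ {±1}⁴ with ε ≠ (1,1,1,1) restricts trivially to at most one of the four subgroups Λ₁, Λ₂, Λ₃, Λ₄; that is, there do not exist two distinct indices k ≠ l in {1,2,3,4} such that χ_ε takes the value 1 on all elements of Λ_k and on all elements of Λ_l. -/
noncomputable section

/-- The character χ_ε : ℤ⁴ → {±1}, χ_ε(a) = ε₁^{a₁}ε₂^{a₂}ε₃^{a₃}ε₄^{a₄}. -/
def chiE (ε : Fin 4 → ℤˣ) (a : Fin 4 → ℤ) : ℤˣ := ∏ i, ε i ^ a i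

/-- The subgroups Λ₁, Λ₂, Λ₃, Λ₄ of ℤ⁴ (coordinates w.r.t. (λ₁,λ₂,e₁,e₂)). -/
def Lam : Fin 4 → Set (Fin 4 → ℤ) :=
  ![{a | ∃ m n : ℤ, a = m • (![1, 0, 0, 0] : Fin 4 → ℤ) + n • ![0, 0, 1, 0]},
    {a | ∃ m n : ℤ, a = m • (![0, 1, 0, 0] : Fin 4 → ℤ) + n • ![0, 0, 0, 1]},
    {a | ∃ m n : ℤ, a = m • (![1, 1, 0, 0] : Fin 4 → ℤ) + n • ![0, 0, 1, 1]},
    {a | ∃ m n : ℤ, a = m • (![1, 1, 0, -1] : Fin 4 → ℤ) + n • ![0, 1, 1, 0]}]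

/-!
For `k ≠ l` the generators of `Λ_k` and `Λ_l` together are a basis of `ℤ⁴`: as rows of a `4 × 4`
matrix they have determinant `±1` (geometrically, the two elliptic curves meet in exactly one
point). Hence `Λ_k + Λ_l = ℤ⁴`, and a homomorphism that is trivial on both summands is trivial.
-/

/-- The generators of `Λ_k` displayed in `Lam`, indexed by `k` and by their position in the pair. -/
def lamGen : Fin 4 → Fin 2 → Fin 4 → ℤ :=
  ![![![1, 0, 0, 0], ![0, 0, 1, 0]],
    ![![0, 1, 0, 0], ![0, 0, 0, 1]],
    ![![1, 1, 0, 0], ![0, 0, 1, 1]],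
    ![![1, 1, 0, -1], ![0, 1, 1, 0]]]

lemma mem_Lam_iff {k : Fin 4} {a : Fin 4 → ℤ} :
    a ∈ Lam k ↔ ∃ m n : ℤ, a = m • lamGen k 0 + n • lamGen k 1 := by
  fin_cases k <;> rfl

/-- The matrix whose rows are the generators of `Λ_k` followed by those of `Λ_l`, so that its
row span is `Λ_k + Λ_l`. -/
def lamPairMatrix (k l : Fin 4) : Matrix (Fin 4) (Fin 4) ℤ :=
  .of ![lamGen k 0, lamGen k 1, lamGen l 0, lamGen l 1]

lemma vecMul_lamPairMatrix (k l : Fin 4) (c : Fin 4 → ℤ) :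
    Matrix.vecMul c (lamPairMatrix k l) =
      (c 0 • lamGen k 0 + c 1 • lamGen k 1) + (c 2 • lamGen l 0 + c 3 • lamGen l 1) := by
  rw [Matrix.vecMul_eq_sum, Fin.sum_univ_four, add_assoc]
  rfl

lemma isUnit_det_lamPairMatrix {k l : Fin 4} (hkl : k ≠ l) : IsUnit (lamPairMatrix k l).det := by
  rw [Int.isUnit_iff]
  revert k l
  decide

open scoped Pointwise in
lemma Lam_add_Lam_eq_univ {k l : Fin 4} (hkl : k ≠ l) : Lam k + Lam l = Set.univ := by
  refine Set.eq_univ_of_forall fun a ↦ ?_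
  have rows_span : Function.Surjective fun c ↦ Matrix.vecMul c (lamPairMatrix k l) :=
    Matrix.vecMul_surjective_iff_isUnit.mpr
      ((Matrix.isUnit_iff_isUnit_det _).mpr (isUnit_det_lamPairMatrix hkl))
  obtain ⟨c, rfl⟩ := rows_span a
  exact Set.mem_add.mpr ⟨_, mem_Lam_iff.mpr ⟨c 0, c 1, rfl⟩, _, mem_Lam_iff.mpr ⟨c 2, c 3, rfl⟩,
    (vecMul_lamPairMatrix k l c).symm⟩

/-- The character of `ℤ^ι` with values in a commutative group that sends the `i`-th standard basis
vector to `ε i`; `chiE ε` is the case `G = ℤˣ`. The lattice is wrapped in `Multiplicative` so that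
characters are monoid homomorphisms. -/
def latticeChar {ι G : Type*} [Fintype ι] [CommGroup G] (ε : ι → G) :
    Multiplicative (ι → ℤ) →* G where
  toFun a := ∏ i, ε i ^ a.toAdd i
  map_one' := by simp
  map_mul' a b := by simp [zpow_add, Finset.prod_mul_distrib]

section latticeChar

variable {ι G : Type*} [Fintype ι] [CommGroup G]

lemma latticeChar_single [DecidableEq ι] (ε : ι → G) (i : ι) :
    latticeChar ε (.ofAdd (Pi.single i 1)) = ε i := by
  simp [latticeChar, Pi.single_apply]

lemma latticeChar_ne_one {ε : ι → G} (hε : ε ≠ 1) : latticeChar ε ≠ 1 := by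
  classical
  contrapose! hε
  funext i
  rw [← latticeChar_single ε i, hε, MonoidHom.one_apply, Pi.one_apply]

end latticeChar

theorem stmt6_general {M : Type*} [MulOneClass M] (χ : Multiplicative (Fin 4 → ℤ) →* M)
    (hχ : χ ≠ 1) :
    ¬ ∃ k l : Fin 4, k ≠ l ∧ (∀ a ∈ Lam k, χ (.ofAdd a) = 1) ∧
      (∀ a ∈ Lam l, χ (.ofAdd a) = 1) := by
  rintro ⟨k, l, hkl, hk, hl⟩
  refine hχ (MonoidHom.ext fun a ↦ ?_)
  obtain ⟨b, hb, c, hc, hbc⟩ := Set.mem_add.mp (Lam_add_Lam_eq_univ hkl ▸ Set.mem_univ a.toAdd)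
  calc χ a = χ (.ofAdd b) * χ (.ofAdd c) := by rw [← map_mul, ← ofAdd_add, hbc, ofAdd_toAdd]
    _ = 1 := by rw [hk b hb, hl c hc, one_mul]

/-- Every non-trivial character χ_ε restricts trivially to at most one of
Λ₁, Λ₂, Λ₃, Λ₄. -/
theorem stmt6 (ε : Fin 4 → ℤˣ) (hε : ε ≠ ![1, 1, 1, 1]) :
    ¬ ∃ k l : Fin 4, k ≠ l ∧ (∀ a ∈ Lam k, chiE ε a = 1) ∧
      (∀ a ∈ Lam l, chiE ε a = 1) :=
  stmt6_general (latticeChar ε) (latticeChar_ne_one (hε.trans_eq (by decide)))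
end
end

section
/- The matrices g₂ and g₃ satisfy g₂² = g₃³ = (g₂g₃)³ = −I₂ (where I₂ is the 2×2 identity matrix), and both g₂ and g₃ map the lattice Λ_A bijectively onto itself. -/
noncomputable section

/-- ζ = (1 + √3·i)/2, a primitive sixth root of unity. -/
def ζ : ℂ := (1 + (Real.sqrt 3 : ℂ) * Complex.I) / 2

/-- g₂ = [[ζ, −1], [ζ, −ζ]]. -/
def g2 : Matrix (Fin 2) (Fin 2) ℂ := !![ζ, -1; ζ, -ζ]

/-- g₃ = [[0, ζ−1], [1−ζ, ζ−1]]. -/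
def g3 : Matrix (Fin 2) (Fin 2) ℂ := !![0, ζ - 1; 1 - ζ, ζ - 1]

/-- The lattice Λ_A = ℤ𝐞₁ ⊕ ℤ𝐞₂ ⊕ ℤ𝐞₃ ⊕ ℤ𝐞₄ ⊂ ℂ², with
𝐞₁ = (1,0), 𝐞₂ = (ζ,1), 𝐞₃ = (0,1+ζ), 𝐞₄ = (0,2). -/
def ΛA : Set (Fin 2 → ℂ) :=
  {v | ∃ a b c d : ℤ, v = (a : ℂ) • ![(1 : ℂ), 0] + (b : ℂ) • ![ζ, 1]
    + (c : ℂ) • ![(0 : ℂ), 1 + ζ] + (d : ℂ) • ![(0 : ℂ), 2]}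

/-
By Cayley–Hamilton the power relations only depend on traces and determinants. `g2` has
characteristic polynomial `X ^ 2 + 1`, while `g3` and `g2 * g3` both have trace `ω = ζ - 1` and
determinant `ω ^ 2`, hence characteristic polynomial `X ^ 2 - ω X + ω ^ 2`, a divisor of
`X ^ 3 + ω ^ 3 = X ^ 3 + 1`.

If `P` is the period matrix of `A`, then `g2 * P` and `g3 * P` are `P` times an integral matrix, so
`g2` and `g3` map the lattice into itself. A power of each is `-1`, which is bijective on the
lattice, hence so are they.
-/

section CayleyHamilton

variable {R : Type*} [CommRing R]

theorem sq_eq_trace_smul_sub_det_smul_one (M : Matrix (Fin 2) (Fin 2) R) :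
    M ^ 2 = M.trace • M - M.det • 1 := by
  rw [Matrix.trace_fin_two, Matrix.det_fin_two, sq]
  ext i j
  fin_cases i <;> fin_cases j <;> simp [Matrix.mul_apply, Fin.sum_univ_two] <;> ring

theorem sq_eq_neg_one_of_trace_eq_zero_of_det_eq_one {M : Matrix (Fin 2) (Fin 2) R}
    (htrace : M.trace = 0) (hdet : M.det = 1) : M ^ 2 = -1 := by
  rw [sq_eq_trace_smul_sub_det_smul_one, htrace, hdet, zero_smul, one_smul, zero_sub]

theorem pow_three_eq_of_det_eq_trace_sq {M : Matrix (Fin 2) (Fin 2) R}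
    (h : M.det = M.trace ^ 2) : M ^ 3 = -(M.trace ^ 3 • 1) := by
  have hsq : M ^ 2 = M.trace • M - M.trace ^ 2 • 1 := by
    rw [← h, ← sq_eq_trace_smul_sub_det_smul_one]
  calc M ^ 3 = M.trace • M ^ 2 - M.trace ^ 2 • M := by
        rw [pow_succ, hsq, sub_mul, smul_mul_assoc, smul_mul_assoc, one_mul, ← sq, hsq]
    _ = -(M.trace ^ 3 • 1) := by rw [hsq]; module

end CayleyHamilton

section BijOn

theorem bijOn_of_bijOn_iterate {α : Type*} {f : α → α} {s : Set α} {n : ℕ} (hn : n ≠ 0)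
    (hf : Set.MapsTo f s s) (h : Set.BijOn f^[n] s s) : Set.BijOn f s s := by
  obtain ⟨k, rfl⟩ := Nat.exists_eq_succ_of_ne_zero hn
  have hinj : Set.InjOn (f^[k] ∘ f) s := Function.iterate_succ f k ▸ h.injOn
  have hsurj : Set.SurjOn (f ∘ f^[k]) s s := Function.iterate_succ' f k ▸ h.surjOn
  exact ⟨hf, hinj.of_comp, hsurj.of_comp (hf.iterate k)⟩

theorem bijOn_neg {V : Type*} [AddGroup V] (L : AddSubgroup V) :
    Set.BijOn Neg.neg (L : Set V) L :=
  ⟨fun _ ↦ neg_mem, neg_injective.injOn, fun v hv ↦ ⟨-v, neg_mem hv, neg_neg v⟩⟩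

variable {ι R : Type*} [Fintype ι] [DecidableEq ι]

theorem mulVec_pow_eq_iterate [Semiring R] (M : Matrix ι ι R) (n : ℕ) :
    (M ^ n).mulVec = M.mulVec^[n] := by
  induction n with
  | zero => ext v; simp
  | succ n ih => ext v; rw [pow_succ, ← Matrix.mulVec_mulVec, ih, Function.iterate_succ_apply]

theorem bijOn_mulVec_of_pow_eq_neg_one [Ring R] {M : Matrix ι ι R} {n : ℕ} (hn : n ≠ 0)
    (hM : M ^ n = -1) {L : AddSubgroup (ι → R)} (hL : Set.MapsTo M.mulVec L L) :
    Set.BijOn M.mulVec L L := by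
  have hiter : M.mulVec^[n] = Neg.neg := by
    ext v
    rw [← mulVec_pow_eq_iterate, hM, Matrix.neg_mulVec, Matrix.one_mulVec]
  exact bijOn_of_bijOn_iterate hn hL (hiter ▸ bijOn_neg L)

end BijOn

section PeriodLattice

variable {ι ι' κ κ' R : Type*} [Ring R]

/-- The lattice with period matrix `P`: the additive subgroup generated by the columns of `P`. No
linear independence is required of the columns. -/
def periodLattice (P : Matrix ι κ R) : AddSubgroup (ι → R) :=
  AddSubgroup.closure (Set.range P.col)

theorem mem_periodLattice_iff [Fintype κ] {P : Matrix ι κ R} {v : ι → R} :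
    v ∈ periodLattice P ↔ ∃ a : κ → ℤ, v = P.mulVec fun k ↦ (a k : R) := by
  have hsum (a : κ → ℤ) : P.mulVec (fun k ↦ (a k : R)) = ∑ k, a k • P.col k := by
    ext i
    simp [Matrix.mulVec, dotProduct, Int.cast_comm]
  rw [periodLattice, ← Submodule.span_int_eq_addSubgroupClosure, Submodule.mem_toAddSubgroup,
    Submodule.mem_span_range_iff_exists_fun]
  simp only [hsum, eq_comm]

theorem mapsTo_mulVec_periodLattice [Fintype ι] [Fintype κ'] {M : Matrix ι' ι R}
    {P : Matrix ι κ R} {P' : Matrix ι' κ' R} {A : Matrix κ' κ ℤ}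
    (h : M * P = P' * A.map (Int.castRingHom R)) :
    Set.MapsTo M.mulVec (periodLattice P) (periodLattice P') := by
  have hcol (j : κ) : M.mulVec (P.col j) = P'.mulVec fun k ↦ (A k j : R) :=
    funext fun i ↦ congrFun₂ h i j
  intro v hv
  rw [SetLike.mem_coe]
  induction hv using AddSubgroup.closure_induction with
  | mem v hv =>
    obtain ⟨j, rfl⟩ := hv
    exact mem_periodLattice_iff.2 ⟨fun k ↦ A k j, hcol j⟩
  | zero => rw [Matrix.mulVec_zero]; exact zero_mem _
  | add v w _ _ hv hw => rw [Matrix.mulVec_add]; exact add_mem hv hw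
  | neg v _ hv => rw [Matrix.mulVec_neg]; exact neg_mem hv

end PeriodLattice

theorem ζ_sq : ζ ^ 2 = ζ - 1 := by
  have hsqrt : (Real.sqrt 3 : ℂ) ^ 2 = 3 := by
    exact_mod_cast Real.sq_sqrt (show (0 : ℝ) ≤ 3 by norm_num)
  rw [ζ]
  linear_combination (-1 / 4 : ℂ) * hsqrt + ((Real.sqrt 3 : ℂ) ^ 2 / 4) * Complex.I_sq

theorem ζ_sub_one_pow_three : (ζ - 1) ^ 3 = 1 := by
  linear_combination (ζ - 2) * ζ_sq

theorem g2_trace : g2.trace = 0 := by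
  simp [g2]

theorem g2_det : g2.det = 1 := by
  rw [g2, Matrix.det_fin_two_of]
  linear_combination -ζ_sq

theorem g2_sq : g2 ^ 2 = -1 :=
  sq_eq_neg_one_of_trace_eq_zero_of_det_eq_one g2_trace g2_det

theorem g3_trace : g3.trace = ζ - 1 := by
  simp [g3]

theorem g3_det : g3.det = (ζ - 1) ^ 2 := by
  rw [g3, Matrix.det_fin_two_of]
  ring

theorem g3_pow_three : g3 ^ 3 = -1 := by
  rw [pow_three_eq_of_det_eq_trace_sq (by rw [g3_det, g3_trace]), g3_trace, ζ_sub_one_pow_three,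
    one_smul]

theorem g2_mul_g3_trace : (g2 * g3).trace = ζ - 1 := by
  rw [g2, g3, Matrix.mul_fin_two, Matrix.trace_fin_two_of]
  ring

theorem g2_mul_g3_det : (g2 * g3).det = (ζ - 1) ^ 2 := by
  rw [Matrix.det_mul, g2_det, g3_det, one_mul]

theorem g2_mul_g3_pow_three : (g2 * g3) ^ 3 = -1 := by
  rw [pow_three_eq_of_det_eq_trace_sq (by rw [g2_mul_g3_det, g2_mul_g3_trace]), g2_mul_g3_trace,
    ζ_sub_one_pow_three, one_smul]

/-- The period matrix of the abelian surface `A`; its columns are `𝐞₁, 𝐞₂, 𝐞₃, 𝐞₄`. -/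
def periodMatrixA : Matrix (Fin 2) (Fin 4) ℂ :=
  !![1, ζ, 0, 0; 0, 1, 1 + ζ, 2]

theorem ΛA_eq_periodLattice : ΛA = periodLattice periodMatrixA := by
  have hsum (a : Fin 4 → ℤ) : periodMatrixA.mulVec (fun k ↦ (a k : ℂ)) =
      (a 0 : ℂ) • ![(1 : ℂ), 0] + (a 1 : ℂ) • ![ζ, 1]
        + (a 2 : ℂ) • ![(0 : ℂ), 1 + ζ] + (a 3 : ℂ) • ![(0 : ℂ), 2] := by
    ext i
    fin_cases i <;> simp [periodMatrixA, Matrix.mulVec, dotProduct, Fin.sum_univ_four, mul_comm]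
  ext v
  rw [SetLike.mem_coe, mem_periodLattice_iff]
  simp only [hsum]
  exact ⟨fun ⟨a, b, c, d, hv⟩ ↦ ⟨![a, b, c, d], hv⟩,
    fun ⟨a, hv⟩ ↦ ⟨a 0, a 1, a 2, a 3, hv⟩⟩

theorem g2_mul_periodMatrixA :
    g2 * periodMatrixA = periodMatrixA *
      (!![0, -2, -1, -2; 1, 1, -1, 0; 1, 0, -2, -2; -1, -1, 2, 1] :
        Matrix (Fin 4) (Fin 4) ℤ).map (Int.castRingHom ℂ) := by
  have hζ := ζ_sq
  ext i j
  fin_cases i <;> fin_cases j <;>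
    simp [g2, periodMatrixA, Matrix.mul_apply, Fin.sum_univ_two, Fin.sum_univ_four] <;>
    grind

theorem g3_mul_periodMatrixA :
    g3 * periodMatrixA = periodMatrixA *
      (!![0, -1, -2, -2; 0, 1, 1, 2; -1, 1, 1, 2; 1, -1, -2, -3] :
        Matrix (Fin 4) (Fin 4) ℤ).map (Int.castRingHom ℂ) := by
  have hζ := ζ_sq
  ext i j
  fin_cases i <;> fin_cases j <;>
    simp [g3, periodMatrixA, Matrix.mul_apply, Fin.sum_univ_two, Fin.sum_univ_four] <;>
    grind

/-- g₂² = g₃³ = (g₂g₃)³ = −I₂, and g₂, g₃ map Λ_A bijectively onto itself. -/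
theorem stmt10 :
    g2 ^ 2 = -1 ∧ g3 ^ 3 = -1 ∧ (g2 * g3) ^ 3 = -1 ∧
    Set.BijOn g2.mulVec ΛA ΛA ∧ Set.BijOn g3.mulVec ΛA ΛA := by
  rw [ΛA_eq_periodLattice]
  exact ⟨g2_sq, g3_pow_three, g2_mul_g3_pow_three,
    bijOn_mulVec_of_pow_eq_neg_one two_ne_zero g2_sq
      (mapsTo_mulVec_periodLattice g2_mul_periodMatrixA),
    bijOn_mulVec_of_pow_eq_neg_one three_ne_zero g3_pow_three
      (mapsTo_mulVec_periodLattice g3_mul_periodMatrixA)⟩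
end
end
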